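/- arXiv:math/0304028 — 3 statements merged into one kernel-verified Lean document; each statement's English description precedes it below -/
import Mathlib

section
/- Let $n \geq 1$ and $k \geq 2$ be natural numbers with $k - 1/2 < n$, and let $\mathfrak{p}(k-1,m) = \sum_{i=1}^{k-1} i^m$. Then for every natural number $N \geq 2$, $\sum_{m=N}^{\infty} \frac{\mathfrak{p}(k-1,m)}{m n^m} < \frac{(k-\frac12)^{N+1}}{N(N+1)\left(1 - \frac{k - 1/2}{n}\right)n^N}$, where the series on the left converges. -/
/-!
The function `t ↦ t ^ m` is convex, so its value at an integer `i` is at most its mean over the unit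
interval centred at `i`. These intervals tile `[1/2, K + 1/2]`, hence
`(m + 1) * ∑_{i ≤ K} i ^ m < (K + 1/2) ^ (m + 1)`. Dividing by `m (m + 1) x ^ m` and replacing
`m (m + 1)` by `N (N + 1)` bounds the tail termwise by a geometric series.
-/

open Finset

section CommRing

variable {R : Type*} [CommRing R] [LinearOrder R] [IsStrictOrderedRing R]

lemma sub_pow_le_add_pow {x h : R} (hx : 0 ≤ x) (hh : 0 ≤ h) (m : ℕ) :
    (x - h) ^ m ≤ (x + h) ^ m := by
  have habs : |x - h| ≤ x + h := abs_le.2 ⟨by linarith, by linarith⟩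
  calc (x - h) ^ m ≤ |x - h| ^ m := (le_abs_self _).trans_eq (abs_pow _ _)
    _ ≤ (x + h) ^ m := pow_le_pow_left₀ (abs_nonneg _) habs m

lemma two_mul_pow_le_add_pow_add_sub_pow {x h : R} (hx : 0 ≤ x) (hh : 0 ≤ h) (m : ℕ) :
    2 * x ^ m ≤ (x + h) ^ m + (x - h) ^ m := by
  induction m with
  | zero => norm_num
  | succ m ih =>
    have hdiff : 0 ≤ (x + h) ^ m - (x - h) ^ m := sub_nonneg.2 (sub_pow_le_add_pow hx hh m)
    calc 2 * x ^ (m + 1) = x * (2 * x ^ m) := by ring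
      _ ≤ x * ((x + h) ^ m + (x - h) ^ m) := by gcongr
      _ ≤ x * ((x + h) ^ m + (x - h) ^ m) + h * ((x + h) ^ m - (x - h) ^ m) :=
        le_add_of_nonneg_right (mul_nonneg hh hdiff)
      _ = (x + h) ^ (m + 1) + (x - h) ^ (m + 1) := by ring

-- The right-hand side is `m + 1` times the integral of `t ^ m` over `[x - h, x + h]`.
lemma two_mul_mul_succ_mul_pow_le_add_pow_sub_sub_pow {x h : R} (hx : 0 ≤ x) (hh : 0 ≤ h)
    (m : ℕ) :
    2 * h * ((m + 1) * x ^ m) ≤ (x + h) ^ (m + 1) - (x - h) ^ (m + 1) := by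
  induction m with
  | zero => exact le_of_eq (by push_cast; ring)
  | succ m ih =>
    have hmean := two_mul_pow_le_add_pow_add_sub_pow hx hh (m + 1)
    calc 2 * h * (((m + 1 : ℕ) + 1) * x ^ (m + 1))
        = x * (2 * h * ((m + 1) * x ^ m)) + h * (2 * x ^ (m + 1)) := by push_cast; ring
      _ ≤ x * ((x + h) ^ (m + 1) - (x - h) ^ (m + 1))
          + h * ((x + h) ^ (m + 1) + (x - h) ^ (m + 1)) := by gcongr
      _ = (x + h) ^ (m + 1 + 1) - (x - h) ^ (m + 1 + 1) := by ring

end CommRing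

section Field

variable {R : Type*} [Field R] [LinearOrder R] [IsStrictOrderedRing R]

lemma succ_mul_sum_Ico_pow_le {a b : ℕ} (hab : a ≤ b) (m : ℕ) :
    (m + 1 : R) * ∑ i ∈ Ico a b, (i : R) ^ m ≤
      ((b : R) - 1 / 2) ^ (m + 1) - ((a : R) - 1 / 2) ^ (m + 1) := by
  rw [mul_sum, ← sum_Ico_sub (fun i : ℕ => ((i : R) - 1 / 2) ^ (m + 1)) hab]
  refine sum_le_sum fun i _ => ?_
  have hmid := two_mul_mul_succ_mul_pow_le_add_pow_sub_sub_pow (Nat.cast_nonneg (α := R) i)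
    one_half_pos.le m
  have hright : ((i + 1 : ℕ) : R) - 1 / 2 = i + 1 / 2 := by push_cast; ring
  rwa [mul_one_div_cancel two_ne_zero, one_mul, ← hright] at hmid

lemma succ_mul_sum_Icc_one_pow_lt (K m : ℕ) :
    (m + 1 : R) * ∑ i ∈ Icc 1 K, (i : R) ^ m < ((K : R) + 1 / 2) ^ (m + 1) := by
  have hIco := succ_mul_sum_Ico_pow_le (R := R) (Nat.le_add_left 1 K) m
  have hright : ((K + 1 : ℕ) : R) - 1 / 2 = K + 1 / 2 := by push_cast; ring
  have hleft : ((1 : ℕ) : R) - 1 / 2 = 1 / 2 := by norm_num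
  rw [Ico_add_one_right_eq_Icc, hright, hleft] at hIco
  exact hIco.trans_lt (sub_lt_self _ (by positivity))

lemma div_mul_pow_lt_of_succ_mul_lt_pow {s a x : R} {N m : ℕ} (hN : 1 ≤ N) (ha : 0 ≤ a)
    (hx : 0 < x) (hs : ((N + m : ℕ) + 1) * s < a ^ (N + m + 1)) :
    s / ((N + m : ℕ) * x ^ (N + m)) < a ^ (N + 1) / (N * (N + 1) * x ^ N) * (a / x) ^ m := by
  have hN₀ : (0 : R) < N := by exact_mod_cast hN
  have hNm : (N : R) ≤ (N + m : ℕ) := by exact_mod_cast Nat.le_add_right N m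
  have : (0 : R) < (N + m : ℕ) := hN₀.trans_le hNm
  have hs' : s < a ^ (N + m + 1) / ((N + m : ℕ) + 1) := (lt_div_iff₀' (by positivity)).2 hs
  calc s / ((N + m : ℕ) * x ^ (N + m))
      < a ^ (N + m + 1) / ((N + m : ℕ) + 1) / ((N + m : ℕ) * x ^ (N + m)) := by gcongr
    _ = a ^ (N + m + 1) / ((N + m : ℕ) * ((N + m : ℕ) + 1) * x ^ (N + m)) := by field_simp
    _ ≤ a ^ (N + m + 1) / (N * (N + 1) * x ^ (N + m)) := by gcongr
    _ = a ^ (N + 1) / (N * (N + 1) * x ^ N) * (a / x) ^ m := by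
      rw [add_right_comm, pow_add a, pow_add x, div_pow, ← mul_assoc, mul_div_mul_comm]

end Field

lemma summable_and_tsum_lt_of_le_mul_geometric {f : ℕ → ℝ} {C r : ℝ} (hr₀ : 0 ≤ r) (hr₁ : r < 1)
    (hf₀ : ∀ m, 0 ≤ f m) (hf : ∀ m, f m ≤ C * r ^ m) {i : ℕ} (hi : f i < C * r ^ i) :
    Summable f ∧ ∑' m, f m < C / (1 - r) := by
  have hgeom : HasSum (fun m => C * r ^ m) (C / (1 - r)) :=
    (hasSum_geometric_of_lt_one hr₀ hr₁).mul_left C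
  refine ⟨hgeom.summable.of_nonneg_of_le hf₀ hf, ?_⟩
  rw [← hgeom.tsum_eq]
  exact hgeom.summable.tsum_lt_tsum_of_nonneg hf₀ hf hi

theorem tail_powerSum_series_lt_general {x : ℝ} {K N : ℕ} (hx : (K : ℝ) + 1 / 2 < x) (hN : 1 ≤ N) :
    Summable (fun m : ℕ =>
        (∑ i ∈ Icc 1 K, (i : ℝ) ^ (N + m)) / ((N + m : ℕ) * x ^ (N + m))) ∧
    (∑' m : ℕ, (∑ i ∈ Icc 1 K, (i : ℝ) ^ (N + m)) / ((N + m : ℕ) * x ^ (N + m)))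
      < ((K : ℝ) + 1 / 2) ^ (N + 1) / (N * (N + 1) * (1 - ((K : ℝ) + 1 / 2) / x) * x ^ N) := by
  have ha : (0 : ℝ) < K + 1 / 2 := by positivity
  have hx₀ : 0 < x := ha.trans hx
  have hterm (m : ℕ) := div_mul_pow_lt_of_succ_mul_lt_pow hN ha.le hx₀
    (succ_mul_sum_Icc_one_pow_lt K (N + m))
  have htail := summable_and_tsum_lt_of_le_mul_geometric (div_nonneg ha.le hx₀.le)
    ((div_lt_one hx₀).2 hx) (fun m => by positivity) (fun m => (hterm m).le) (hterm 0)
  rwa [div_div, mul_right_comm] at htail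

/-- The tail of the series `∑_m p(k-1,m)/(m nᵐ)` starting at `m = N` converges and is
strictly below `ε^k_n(N)`. -/
theorem tail_powerSum_series_lt (n k N : ℕ) (hn : 1 ≤ n) (hk : 2 ≤ k)
    (hkn : (k : ℝ) - 1/2 < n) (hN : 2 ≤ N) :
    Summable (fun m : ℕ =>
        (∑ i ∈ Finset.Icc 1 (k-1), (i : ℝ)^(N + m)) / ((N + m : ℕ) * (n : ℝ)^(N + m))) ∧
    (∑' m : ℕ,
        (∑ i ∈ Finset.Icc 1 (k-1), (i : ℝ)^(N + m)) / ((N + m : ℕ) * (n : ℝ)^(N + m)))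
      < ((k : ℝ) - 1/2)^(N+1) / (N * (N+1) * (1 - ((k : ℝ) - 1/2)/n) * (n : ℝ)^N) := by
  rw [show (k : ℝ) - 1 / 2 = (k - 1 : ℕ) + 1 / 2 by rw [Nat.cast_pred (by lia)]; ring] at hkn ⊢
  exact tail_powerSum_series_lt_general hkn (by lia)
end

section
/- Let $n \geq 1$ and $k \geq 2$ be natural numbers with $k \leq n$, and let $\pi^k_n = \prod_{i=1}^{k-1}(1 - i/n)$. Then $\frac{(k-1)k}{2n} < -\ln(\pi^k_n) < \frac{(k-1)k}{2n} + \frac{(k-\frac12)^3}{6n^2\left(1 - \frac{k-1/2}{n}\right)}$. -/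
/-!
Expanding `-log (1 - i / n) = ∑ (i / n) ^ j / j` and exchanging the sums writes the negative
logarithm of the product as a series of positive terms, the `j`-th one being the power sum
`∑ i ^ j` divided by `j * n ^ j`. Every partial sum is therefore a lower bound. For the upper bound,
convexity of `x ^ j` gives `i ^ j ≤ ∫ x ^ j` over the interval of length one centred at `i`, so that
`1 ^ j + ⋯ + m ^ j < (m + 1 / 2) ^ (j + 1) / (j + 1)`; these majorants make the tail a geometric
series once `1 / (j * (j + 1))` is replaced by its largest value.
-/

open Finset

section PowerSums

variable {R : Type*} [Field R] [LinearOrder R] [IsStrictOrderedRing R]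

theorem two_mul_pow_le_add_pow_add_sub_pow_s5 {a h : R} (h_nonneg : 0 ≤ h) (h_le : h ≤ a) (j : ℕ) :
    2 * a ^ j ≤ (a + h) ^ j + (a - h) ^ j := by
  have jensen := (convexOn_pow j).2 (Set.mem_Ici.2 (by linarith : 0 ≤ a + h))
    (Set.mem_Ici.2 (sub_nonneg.2 h_le)) (by norm_num : (0 : R) ≤ 1 / 2)
    (by norm_num : (0 : R) ≤ 1 / 2) (by norm_num)
  have midpoint : (1 / 2 : R) • (a + h) + (1 / 2 : R) • (a - h) = a := by
    simp only [smul_eq_mul]; ring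
  rw [midpoint, smul_eq_mul, smul_eq_mul] at jensen
  linarith

theorem two_mul_mul_pow_le_add_pow_sub_sub_pow {a h : R} (h_nonneg : 0 ≤ h) (h_le : h ≤ a)
    (j : ℕ) : 2 * h * ((j + 1) * a ^ j) ≤ (a + h) ^ (j + 1) - (a - h) ^ (j + 1) := by
  induction j with
  | zero => exact le_of_eq (by push_cast; ring)
  | succ j ih =>
    have a_nonneg : 0 ≤ a := h_nonneg.trans h_le
    calc 2 * h * (((j + 1 : ℕ) + 1) * a ^ (j + 1))
        = a * (2 * h * ((j + 1) * a ^ j)) + h * (2 * a ^ (j + 1)) := by push_cast; ring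
      _ ≤ a * ((a + h) ^ (j + 1) - (a - h) ^ (j + 1))
            + h * ((a + h) ^ (j + 1) + (a - h) ^ (j + 1)) := by
          gcongr
          exact two_mul_pow_le_add_pow_add_sub_pow_s5 h_nonneg h_le (j + 1)
      _ = (a + h) ^ (j + 1 + 1) - (a - h) ^ (j + 1 + 1) := by ring

theorem succ_mul_sum_Icc_pow_le (m j : ℕ) :
    (j + 1) * ∑ i ∈ Icc 1 m, (i : R) ^ j ≤ (m + 1 / 2) ^ (j + 1) - (1 / 2) ^ (j + 1) := by
  induction m with
  | zero => simp
  | succ m ih =>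
    have last_term := two_mul_mul_pow_le_add_pow_sub_sub_pow (a := (m : R) + 1) (h := 1 / 2)
      (by norm_num) (by linarith [m.cast_nonneg (α := R)]) j
    rw [show (m : R) + 1 - 1 / 2 = m + 1 / 2 by ring] at last_term
    rw [sum_Icc_succ_top (by lia), mul_add]
    push_cast
    linarith

theorem sum_Icc_div_pow_lt {n : R} (hn : 0 < n) (m j : ℕ) :
    ∑ i ∈ Icc 1 m, ((i : R) / n) ^ j < n * ((m + 1 / 2) / n) ^ (j + 1) / (j + 1) := by
  have power_sum_lt : (j + 1) * ∑ i ∈ Icc 1 m, (i : R) ^ j < (m + 1 / 2) ^ (j + 1) :=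
    (succ_mul_sum_Icc_pow_le m j).trans_lt (sub_lt_self _ (by positivity))
  calc ∑ i ∈ Icc 1 m, ((i : R) / n) ^ j
      = (j + 1) * (∑ i ∈ Icc 1 m, (i : R) ^ j) / ((j + 1) * n ^ j) := by
        simp only [div_pow, ← sum_div]
        field_simp
    _ < (m + 1 / 2) ^ (j + 1) / ((j + 1) * n ^ j) := by gcongr
    _ = n * ((m + 1 / 2) / n) ^ (j + 1) / (j + 1) := by
        rw [div_pow _ n, pow_succ n]
        field_simp

theorem sum_Icc_div_pow_div_lt_geometric {n : R} (hn : 0 < n) (m d j : ℕ) :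
    (∑ i ∈ Icc 1 m, ((i : R) / n) ^ (j + d + 1)) / ((j + d : ℕ) + 1) <
      n * ((m + 1 / 2) / n) ^ (d + 2) / ((d + 1) * (d + 2)) * ((m + 1 / 2) / n) ^ j := by
  calc (∑ i ∈ Icc 1 m, ((i : R) / n) ^ (j + d + 1)) / ((j + d : ℕ) + 1)
      < n * ((m + 1 / 2) / n) ^ (j + d + 1 + 1) / ((j + d + 1 : ℕ) + 1) / ((j + d : ℕ) + 1) := by
        gcongr
        exact sum_Icc_div_pow_lt hn m (j + d + 1)
    _ = n * ((m + 1 / 2) / n) ^ (j + (d + 2)) / ((j + d + 1) * (j + d + 2)) := by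
        rw [div_div]
        push_cast
        ring_nf
    _ ≤ n * ((m + 1 / 2) / n) ^ (j + (d + 2)) / ((d + 1) * (d + 2)) := by
        gcongr <;> exact le_add_of_nonneg_left (Nat.cast_nonneg j)
    _ = n * ((m + 1 / 2) / n) ^ (d + 2) / ((d + 1) * (d + 2)) * ((m + 1 / 2) / n) ^ j := by
        ring

end PowerSums

section LogProd

variable {ι : Type*} {s : Finset ι} {x : ι → ℝ}

theorem hasSum_sum_pow_div_neg_log_prod_one_sub (hx : ∀ i ∈ s, |x i| < 1) :
    HasSum (fun j : ℕ ↦ (∑ i ∈ s, x i ^ (j + 1)) / (j + 1)) (-Real.log (∏ i ∈ s, (1 - x i))) := by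
  have factor_ne_zero : ∀ i ∈ s, 1 - x i ≠ 0 := fun i hi ↦
    (sub_pos.2 (lt_of_abs_lt (hx i hi))).ne'
  simp only [Real.log_prod factor_ne_zero, ← sum_neg_distrib, sum_div]
  exact hasSum_sum fun i hi ↦ Real.hasSum_pow_div_log_of_abs_lt_one (hx i hi)

theorem sum_range_lt_neg_log_prod_one_sub (hs : s.Nonempty) (hx : ∀ i ∈ s, x i ∈ Set.Ioo 0 1)
    (d : ℕ) :
    ∑ j ∈ range d, (∑ i ∈ s, x i ^ (j + 1)) / (j + 1) < -Real.log (∏ i ∈ s, (1 - x i)) := by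
  have term_pos (j : ℕ) : 0 < (∑ i ∈ s, x i ^ (j + 1)) / (j + 1) :=
    div_pos (sum_pos (fun i hi ↦ pow_pos (hx i hi).1 _) hs) (by positivity)
  have log_series := hasSum_sum_pow_div_neg_log_prod_one_sub fun i hi ↦
    (abs_of_pos (hx i hi).1).trans_lt (hx i hi).2
  calc ∑ j ∈ range d, (∑ i ∈ s, x i ^ (j + 1)) / (j + 1)
      < ∑ j ∈ range (d + 1), (∑ i ∈ s, x i ^ (j + 1)) / (j + 1) := by
        rw [sum_range_succ]
        exact lt_add_of_pos_right _ (term_pos d)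
    _ ≤ -Real.log (∏ i ∈ s, (1 - x i)) :=
        sum_le_hasSum _ (fun j _ ↦ (term_pos j).le) log_series

end LogProd

theorem neg_log_prod_one_sub_div_lt {n : ℝ} {m : ℕ} (hmn : (m : ℝ) + 1 / 2 < n) (d : ℕ) :
    -Real.log (∏ i ∈ Icc 1 m, (1 - (i : ℝ) / n)) <
      ∑ j ∈ range d, (∑ i ∈ Icc 1 m, ((i : ℝ) / n) ^ (j + 1)) / (j + 1)
        + (m + 1 / 2) ^ (d + 2) /
          ((d + 1) * (d + 2) * n ^ (d + 1) * (1 - (m + 1 / 2) / n)) := by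
  have n_pos : 0 < n := lt_trans (by positivity) hmn
  have ratio_lt_one : (m + 1 / 2) / n < 1 := (div_lt_one n_pos).2 hmn
  have abs_lt_one : ∀ i ∈ Icc 1 m, |(i : ℝ) / n| < 1 := fun i hi ↦ by
    have i_le : (i : ℝ) ≤ m := by exact_mod_cast (mem_Icc.1 hi).2
    rw [abs_of_nonneg (by positivity), div_lt_one n_pos]
    linarith
  have tail := (hasSum_nat_add_iff' d).2 (hasSum_sum_pow_div_neg_log_prod_one_sub abs_lt_one)
  have geometric := (hasSum_geometric_of_lt_one (by positivity) ratio_lt_one).mul_left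
    (n * ((m + 1 / 2) / n) ^ (d + 2) / ((d + 1) * (d + 2)))
  have tail_lt := hasSum_lt (fun j ↦ (sum_Icc_div_pow_div_lt_geometric n_pos m d j).le)
    (sum_Icc_div_pow_div_lt_geometric n_pos m d 0) tail geometric
  have remainder : n * ((m + 1 / 2) / n) ^ (d + 2) / ((d + 1) * (d + 2)) * (1 - (m + 1 / 2) / n)⁻¹
      = (m + 1 / 2) ^ (d + 2) / ((d + 1) * (d + 2) * n ^ (d + 1) * (1 - (m + 1 / 2) / n)) := by
    have := (sub_pos.2 ratio_lt_one).ne'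
    rw [div_pow _ n]
    field_simp
    ring
  linarith

theorem sum_Icc_pred_div {K : Type*} [Field K] [CharZero K] (n : K) {k : ℕ} (hk : 1 ≤ k) :
    ∑ i ∈ Icc 1 (k - 1), (i : K) / n = (k - 1) * k / (2 * n) := by
  obtain ⟨m, rfl⟩ := Nat.exists_eq_add_of_le' hk
  rw [Nat.add_sub_cancel]
  clear hk
  induction m with
  | zero => simp
  | succ m ih =>
    rw [sum_Icc_succ_top (by lia), ih]
    push_cast
    ring

theorem birthday_log_bounds_N2_general (d : ℕ) {n : ℝ} {k : ℕ} (hk : 2 ≤ k)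
    (hkn : (k : ℝ) - 1 / 2 < n) :
    ∑ j ∈ range d, (∑ i ∈ Icc 1 (k - 1), ((i : ℝ) / n) ^ (j + 1)) / (j + 1)
      < -Real.log (∏ i ∈ Icc 1 (k - 1), (1 - (i : ℝ) / n)) ∧
    -Real.log (∏ i ∈ Icc 1 (k - 1), (1 - (i : ℝ) / n))
      < ∑ j ∈ range d, (∑ i ∈ Icc 1 (k - 1), ((i : ℝ) / n) ^ (j + 1)) / (j + 1)
        + ((k : ℝ) - 1 / 2) ^ (d + 2) /
          ((d + 1) * (d + 2) * n ^ (d + 1) * (1 - ((k : ℝ) - 1 / 2) / n)) := by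
  have midpoint : (k : ℝ) - 1 / 2 = (k - 1 : ℕ) + 1 / 2 := by
    rw [Nat.cast_pred (by lia)]
    ring
  rw [midpoint] at hkn ⊢
  have n_pos : 0 < n := lt_trans (by positivity) hkn
  refine ⟨sum_range_lt_neg_log_prod_one_sub (nonempty_Icc.2 (by lia)) (fun i hi ↦ ?_) d,
    neg_log_prod_one_sub_div_lt hkn d⟩
  have i_pos : (0 : ℝ) < i := by exact_mod_cast (mem_Icc.1 hi).1
  have i_le : (i : ℝ) ≤ (k - 1 : ℕ) := by exact_mod_cast (mem_Icc.1 hi).2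
  exact ⟨div_pos i_pos n_pos, (div_lt_one n_pos).2 (by linarith)⟩

/-- The `N = 2` case of the main theorem. -/
theorem birthday_log_bounds_N2 (n k : ℕ) (hn : 1 ≤ n) (hk : 2 ≤ k) (hkn : k ≤ n) :
    ((k : ℝ) - 1) * k / (2 * n)
      < -Real.log (∏ i ∈ Finset.Icc 1 (k-1), (1 - (i : ℝ)/n)) ∧
    -Real.log (∏ i ∈ Finset.Icc 1 (k-1), (1 - (i : ℝ)/n))
      < ((k : ℝ) - 1) * k / (2 * n)
        + ((k : ℝ) - 1/2)^3 / (6 * (n : ℝ)^2 * (1 - ((k : ℝ) - 1/2)/n)) := by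
  have k_sub_half_lt : (k : ℝ) - 1 / 2 < n := by linarith [Nat.cast_le (α := ℝ).2 hkn]
  simpa only [sum_range_one, zero_add, pow_one, Nat.cast_zero, div_one, Nat.reduceAdd,
    sum_Icc_pred_div (n : ℝ) (one_le_two.trans hk),
    show (((1 : ℕ) : ℝ) + 1) * ((1 : ℕ) + 2) = 6 by norm_num]
    using birthday_log_bounds_N2_general 1 hk k_sub_half_lt
end

section
/- Let $n \geq 1$ and $1 \leq k \leq n$ be natural numbers, and fix an element $x$ of an $n$-element set $S$. The number of functions $f : S \to S$ such that the first $k$ iterates $x, f(x), \dots, f^{k-1}(x)$ are pairwise distinct (equivalently, the orbit of $x$ under $f$ has size at least $k$) is $n^{n-k+1} \cdot \prod_{i=1}^{k-1}(n-i)$. Equivalently, for a uniformly random function $f : S \to S$, the probability that the orbit of $x$ under $f$ has size at least $k$ is $\pi^k_n = \prod_{i=1}^{k-1}(1 - i/n)$. -/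
/-!
Choosing `f` and an independent point `z` uniformly, the exchange of the value `f^[m+1] x` with `z`
is measure preserving as long as `x, …, f^[m] x` are distinct, since then changing `f` at `f^[m] x`
leaves these `m + 1` points alone. Hence `f^[m+1] x` avoids them exactly as often as `z` does, that
is with probability `1 - (m+1)/n`.
-/

open Set Function

section CardinalArithmetic

variable {α β : Type*}

lemma ncard_pairs_of_forall_ncard_eq [Finite α] [Finite β] {s : Set α} {t : α → Set β} {c : ℕ}
    (h : ∀ a ∈ s, (t a).ncard = c) :
    {p : α × β | p.1 ∈ s ∧ p.2 ∈ t p.1}.ncard = s.ncard * c := by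
  have := Fintype.ofFinite s
  let e : {p : α × β | p.1 ∈ s ∧ p.2 ∈ t p.1} ≃ Σ a : s, t a :=
    { toFun := fun p => ⟨⟨p.1.1, p.2.1⟩, ⟨p.1.2, p.2.2⟩⟩
      invFun := fun q => ⟨(q.1, q.2), q.1.2, q.2.2⟩ }
  calc {p : α × β | p.1 ∈ s ∧ p.2 ∈ t p.1}.ncard
      = ∑ a : s, (t a).ncard := (Nat.card_congr e).trans Nat.card_sigma
    _ = ∑ _a : s, c := Finset.sum_congr rfl fun a _ => h a a.2
    _ = s.ncard * c := by
      rw [Finset.sum_const, smul_eq_mul, Finset.card_univ, ← Nat.card_eq_fintype_card,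
        Nat.card_coe_set_eq]

lemma descFactorial_eq_mul_prod_Icc (n : ℕ) {k : ℕ} (hk : 1 ≤ k) :
    n.descFactorial k = n * ∏ i ∈ Finset.Icc 1 (k - 1), (n - i) := by
  rw [Nat.descFactorial_eq_prod_range, Finset.prod_range_eq_mul_Ico _ hk, Nat.sub_zero,
    Finset.Icc_sub_one_right_eq_Ico_of_not_isMin (not_isMin_of_lt hk)]

lemma cast_descFactorial_div_pow {K : Type*} [Field K] [CharZero K] {n : ℕ} (hn : n ≠ 0) (k : ℕ) :
    (n.descFactorial k : K) / (n : K) ^ k = ∏ i ∈ Finset.Icc 1 (k - 1), (1 - (i : K) / n) := by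
  have hn' : (n : K) ≠ 0 := Nat.cast_ne_zero.mpr hn
  calc (n.descFactorial k : K) / (n : K) ^ k
      = ∏ i ∈ Finset.range k, (((n : K) - i) / n) := by
        rw [Nat.descFactorial_eq_prod_range, ← Finset.prod_range_natCast_sub,
          Finset.prod_div_distrib, Finset.prod_const, Finset.card_range]
    _ = ∏ i ∈ Finset.range k, (1 - (i : K) / n) := by simp only [sub_div, div_self hn']
    _ = ∏ i ∈ Finset.Icc 1 (k - 1), (1 - (i : K) / n) := by
        refine (Finset.prod_subset (fun i hi => ?_) fun i hi hi' => ?_).symm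
        · simp only [Finset.mem_Icc, Finset.mem_range] at hi ⊢
          omega
        · obtain rfl : i = 0 := by
            simp only [Finset.mem_Icc, Finset.mem_range] at hi hi'
            omega
          simp

end CardinalArithmetic

section DistinctIterates

variable {α : Type*}

lemma iterate_update_of_forall_ne [DecidableEq α] {f : α → α} {x y : α} {i : ℕ}
    (h : ∀ j < i, f^[j] x ≠ y) (z : α) : (update f y z)^[i] x = f^[i] x := by
  induction i with
  | zero => rfl
  | succ i ih =>
    rw [iterate_succ_apply', iterate_succ_apply', ih fun j hj => h j (hj.trans i.lt_succ_self),
      update_of_ne (h i i.lt_succ_self)]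

/-- The first `k` points `x, f x, …, f^[k-1] x` of the orbit of `x`, as a set. -/
def orbitPrefix (f : α → α) (x : α) (k : ℕ) : Set α :=
  (fun i => f^[i] x) '' Iio k

/-- The self-maps `f` for which `x, f x, …, f^[k-1] x` are pairwise distinct, that is, under which
the orbit of `x` has at least `k` points. -/
def distinctIterates (x : α) (k : ℕ) : Set (α → α) :=
  {f | InjOn (fun i => f^[i] x) (Iio k)}

/-- The exchange of the value `f^[m+1] x = f (f^[m] x)` with the second component of a pair
`(f, z)`. -/
def exchangeNext [DecidableEq α] (x : α) (m : ℕ) (p : (α → α) × α) : (α → α) × α :=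
  (update p.1 (p.1^[m] x) p.2, p.1 (p.1^[m] x))

variable {f : α → α} {x : α} {k m : ℕ}

lemma ncard_orbitPrefix (hf : f ∈ distinctIterates x k) : (orbitPrefix f x k).ncard = k :=
  hf.ncard_image.trans (ncard_Iio_nat k)

lemma mem_distinctIterates_succ :
    f ∈ distinctIterates x (k + 1) ↔ f ∈ distinctIterates x k ∧ f^[k] x ∉ orbitPrefix f x k := by
  have hIio : Iio (k + 1) = insert k (Iio k) := by
    ext i
    simp only [mem_Iio, mem_insert_iff]
    omega
  simp only [distinctIterates, orbitPrefix, mem_ofPred_eq, hIio, injOn_insert self_notMem_Iio]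

lemma distinctIterates_eq_univ_of_le_one (x : α) (hk : k ≤ 1) : distinctIterates x k = univ :=
  eq_univ_of_forall fun f i hi j hj _ => by simp only [mem_Iio] at hi hj; omega

section ExchangeNext

variable [DecidableEq α]

lemma eqOn_iterate_update (hf : f ∈ distinctIterates x (m + 1)) (z : α) :
    EqOn (fun i => (update f (f^[m] x) z)^[i] x) (fun i => f^[i] x) (Iio (m + 1)) := by
  refine fun i hi => iterate_update_of_forall_ne (fun j hj hjm => ?_) z
  have hjm' : j = m := hf (mem_Iio.2 (hj.trans hi)) (mem_Iio.2 m.lt_succ_self) hjm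
  exact (hj.trans_le (Nat.lt_succ_iff.1 hi)).ne hjm'

lemma iterate_exchangeNext {p : (α → α) × α} (hp : p.1 ∈ distinctIterates x (m + 1)) :
    (exchangeNext x m p).1^[m] x = p.1^[m] x :=
  eqOn_iterate_update hp p.2 (mem_Iio.2 m.lt_succ_self)

lemma exchangeNext_mem_distinctIterates {p : (α → α) × α}
    (hp : p.1 ∈ distinctIterates x (m + 1)) :
    (exchangeNext x m p).1 ∈ distinctIterates x (m + 1) :=
  (eqOn_iterate_update hp p.2).injOn_iff.2 hp

lemma orbitPrefix_exchangeNext {p : (α → α) × α} (hp : p.1 ∈ distinctIterates x (m + 1)) :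
    orbitPrefix (exchangeNext x m p).1 x (m + 1) = orbitPrefix p.1 x (m + 1) :=
  (eqOn_iterate_update hp p.2).image_eq

lemma iterate_succ_exchangeNext {p : (α → α) × α} (hp : p.1 ∈ distinctIterates x (m + 1)) :
    (exchangeNext x m p).1^[m + 1] x = p.2 := by
  rw [iterate_succ_apply', iterate_exchangeNext hp]
  exact update_self ..

lemma exchangeNext_exchangeNext {p : (α → α) × α} (hp : p.1 ∈ distinctIterates x (m + 1)) :
    exchangeNext x m (exchangeNext x m p) = p := by
  rw [exchangeNext, iterate_exchangeNext hp]
  simp only [exchangeNext, update_self, update_idem, update_eq_self]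

lemma bijOn_exchangeNext (x : α) (m : ℕ) :
    BijOn (exchangeNext x m) (distinctIterates x (m + 2) ×ˢ univ)
      {p | p.1 ∈ distinctIterates x (m + 1) ∧ p.2 ∈ (orbitPrefix p.1 x (m + 1))ᶜ} := by
  have hdist {p : (α → α) × α} (hp : p ∈ distinctIterates x (m + 2) ×ˢ univ) :=
    mem_distinctIterates_succ.1 hp.1
  refine InvOn.bijOn (f' := exchangeNext x m)
    ⟨fun p hp => exchangeNext_exchangeNext (hdist hp).1,
      fun p hp => exchangeNext_exchangeNext hp.1⟩ (fun p hp => ?_) fun p hp => ?_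
  · obtain ⟨hp, hnew⟩ := hdist hp
    refine ⟨exchangeNext_mem_distinctIterates hp, ?_⟩
    rwa [orbitPrefix_exchangeNext hp, mem_compl_iff, exchangeNext, ← iterate_succ_apply' p.1]
  · refine ⟨mem_distinctIterates_succ.2 ⟨exchangeNext_mem_distinctIterates hp.1, ?_⟩, mem_univ _⟩
    rw [iterate_succ_exchangeNext hp.1, orbitPrefix_exchangeNext hp.1]
    exact hp.2

end ExchangeNext

section Counting

variable [Finite α]

lemma ncard_distinctIterates_succ_mul_card (x : α) (k : ℕ) :
    (distinctIterates x (k + 1)).ncard * Nat.card α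
      = (distinctIterates x k).ncard * (Nat.card α - k) := by
  classical
  cases k with
  | zero =>
    rw [distinctIterates_eq_univ_of_le_one x le_rfl,
      distinctIterates_eq_univ_of_le_one x zero_le_one, Nat.sub_zero]
  | succ m =>
    rw [← ncard_univ α, ← ncard_prod, (bijOn_exchangeNext x m).ncard_eq]
    refine ncard_pairs_of_forall_ncard_eq (t := fun f => (orbitPrefix f x (m + 1))ᶜ) fun f hf => ?_
    rw [ncard_compl, ncard_orbitPrefix hf, ncard_univ]

lemma ncard_distinctIterates_mul_card_pow (x : α) (k : ℕ) :
    (distinctIterates x k).ncard * Nat.card α ^ k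
      = Nat.card α ^ Nat.card α * (Nat.card α).descFactorial k := by
  induction k with
  | zero =>
    rw [distinctIterates_eq_univ_of_le_one x zero_le_one, ncard_univ, Nat.card_fun, pow_zero,
      Nat.descFactorial_zero]
  | succ k ih =>
    calc (distinctIterates x (k + 1)).ncard * Nat.card α ^ (k + 1)
        = (distinctIterates x (k + 1)).ncard * Nat.card α * Nat.card α ^ k := by ring
      _ = (distinctIterates x k).ncard * Nat.card α ^ k * (Nat.card α - k) := by
        rw [ncard_distinctIterates_succ_mul_card]
        ring
      _ = Nat.card α ^ Nat.card α * (Nat.card α).descFactorial (k + 1) := by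
        rw [ih, Nat.descFactorial_succ]
        ring

lemma ncard_distinctIterates (x : α) (hk : 1 ≤ k) :
    (distinctIterates x k).ncard
      = Nat.card α ^ (Nat.card α - k + 1) * ∏ i ∈ Finset.Icc 1 (k - 1), (Nat.card α - i) := by
  have hcard : 0 < Nat.card α := Nat.card_pos_iff.2 ⟨⟨x⟩, ‹_›⟩
  refine Nat.eq_of_mul_eq_mul_right (pow_pos hcard k) ?_
  rw [ncard_distinctIterates_mul_card_pow, descFactorial_eq_mul_prod_Icc _ hk]
  rcases le_or_gt k (Nat.card α) with hkn | hkn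
  · rw [← mul_assoc, ← pow_succ, mul_right_comm, ← pow_add]
    congr 2
    omega
  · have hzero : ∏ i ∈ Finset.Icc 1 (k - 1), (Nat.card α - i) = 0 :=
      Finset.prod_eq_zero (Finset.mem_Icc.2 ⟨hcard, Nat.le_sub_one_of_lt hkn⟩) (Nat.sub_self _)
    rw [hzero, mul_zero, mul_zero, mul_zero, zero_mul]

lemma ncard_distinctIterates_div_card_pow_card {K : Type*} [Field K] [CharZero K] (x : α) (k : ℕ) :
    ((distinctIterates x k).ncard : K) / (Nat.card α : K) ^ Nat.card α
      = ∏ i ∈ Finset.Icc 1 (k - 1), (1 - (i : K) / Nat.card α) := by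
  have hcard : Nat.card α ≠ 0 := (Nat.card_pos_iff.2 ⟨⟨x⟩, ‹_›⟩).ne'
  have hpow (j : ℕ) : (Nat.card α : K) ^ j ≠ 0 := pow_ne_zero j (Nat.cast_ne_zero.2 hcard)
  rw [← cast_descFactorial_div_pow hcard, div_eq_div_iff (hpow _) (hpow _),
    mul_comm ((Nat.card α).descFactorial k : K)]
  exact_mod_cast ncard_distinctIterates_mul_card_pow x k

theorem orbit_size_ge_count_general (x : α) (hk : 1 ≤ k) :
    {f : α → α | ∀ i j : ℕ, i < k → j < k → f^[i] x = f^[j] x → i = j}.ncard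
      = Nat.card α ^ (Nat.card α - k + 1) * ∏ i ∈ Finset.Icc 1 (k - 1), (Nat.card α - i) ∧
    ({f : α → α | ∀ i j : ℕ, i < k → j < k → f^[i] x = f^[j] x → i = j}.ncard : ℝ)
        / (Nat.card α : ℝ) ^ Nat.card α
      = ∏ i ∈ Finset.Icc 1 (k - 1), (1 - (i : ℝ) / Nat.card α) := by
  have hset : {f : α → α | ∀ i j : ℕ, i < k → j < k → f^[i] x = f^[j] x → i = j}
      = distinctIterates x k :=
    Set.ext fun f => ⟨fun h i hi j hj => h i j hi hj, fun h i j hi hj => h hi hj⟩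
  rw [hset]
  exact ⟨ncard_distinctIterates x hk, ncard_distinctIterates_div_card_pow_card x k⟩

end Counting

end DistinctIterates

/-- The number of functions `f : S → S` (with `|S| = n`) under which the first `k` iterates
`x, f(x), …, f^{k-1}(x)` of a fixed point `x` are pairwise distinct is
`n^{n-k+1} · ∏_{i=1}^{k-1}(n-i)`; equivalently, the probability that the orbit of `x` under
a uniformly random `f` has size at least `k` is `π^k_n`. -/
theorem orbit_size_ge_count (n k : ℕ) (hn : 1 ≤ n) (hk : 1 ≤ k) (hkn : k ≤ n) (x : Fin n) :
    {f : Fin n → Fin n | ∀ i j : ℕ, i < k → j < k → f^[i] x = f^[j] x → i = j}.ncard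
      = n^(n-k+1) * ∏ i ∈ Finset.Icc 1 (k-1), (n - i) ∧
    ({f : Fin n → Fin n | ∀ i j : ℕ, i < k → j < k → f^[i] x = f^[j] x → i = j}.ncard : ℝ)
        / (n : ℝ)^n
      = ∏ i ∈ Finset.Icc 1 (k-1), (1 - (i : ℝ)/n) := by
  simpa only [Nat.card_fin] using orbit_size_ge_count_general x hk
end
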